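/- Let A, B, C be nonempty finite sets with |C| = |B|, and let f : A × B → C be such that for every a ∈ A the map b ↦ f(a, b) is injective; for σ ∈ C let φ_σ(a) denote the unique b ∈ B with f(a, b) = σ. Let (U, V) be uniformly distributed on A × B, let h₁ be a function from A to a finite set and h₂ a function from B to a finite set, and let η ≥ 0. If I(h₁(U); h₂(V) | f(U, V)) ≤ η, then there exists σ ∈ C such that I(h₁(U'); h₂(φ_σ(U'))) ≤ η, where U' is uniformly distributed on A and I denotes (conditional) mutual information with logarithms to base 2. -/

import Mathlib

/-- `nml2 x = -x * log₂ x`, the summand of base-2 Shannon entropy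
(with the convention `0 · log 0 = 0`). -/
noncomputable def nml2 (x : ℝ) : ℝ := -x * Real.logb 2 x

open Classical in
/-- Base-2 Shannon entropy of the random variable `X` defined on the finite
probability space `Ω` with probability mass function `p`. -/
noncomputable def entropy {Ω S : Type*} [Fintype Ω] [Fintype S]
    (p : Ω → ℝ) (X : Ω → S) : ℝ :=
  ∑ s : S, nml2 (∑ ω : Ω, if X ω = s then p ω else 0)

/-- Conditional Shannon entropy `H(X | Y)` (base 2). -/
noncomputable def condEntropy {Ω S T : Type*} [Fintype Ω] [Fintype S] [Fintype T]
    (p : Ω → ℝ) (X : Ω → S) (Y : Ω → T) : ℝ :=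
  entropy p (fun ω => (X ω, Y ω)) - entropy p Y

/-- Mutual information `I(X; Y)` (base 2). -/
noncomputable def mutualInfo {Ω S T : Type*} [Fintype Ω] [Fintype S] [Fintype T]
    (p : Ω → ℝ) (X : Ω → S) (Y : Ω → T) : ℝ :=
  entropy p X + entropy p Y - entropy p (fun ω => (X ω, Y ω))

/-- Conditional mutual information `I(X; Y | Z)` (base 2). -/
noncomputable def condMutualInfo {Ω S T W : Type*} [Fintype Ω] [Fintype S] [Fintype T]
    [Fintype W] (p : Ω → ℝ) (X : Ω → S) (Y : Ω → T) (Z : Ω → W) : ℝ :=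
  entropy p (fun ω => (X ω, Z ω)) + entropy p (fun ω => (Y ω, Z ω))
    - entropy p (fun ω => ((X ω, Y ω), Z ω)) - entropy p Z

/-!
Conditioning on `Z` writes `I(X; Y | Z)` as the average, weighted by `P(Z = z)`, of the mutual
informations of `X` and `Y` under the conditional distributions given `Z = z`, so some `z` does at
least as well as the average. For `Z = f (U, V)` with `V` uniform and independent of `U`, exactly
one value of `V` is compatible with each pair `U = a`, `Z = σ`. Hence `U` is independent of `Z`,
and given `Z = σ` the pair `(U, V)` is distributed as `(U, φ σ U)`.
-/

section Distributions

variable {Ω S : Type*} [Fintype Ω]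

open Classical in
/-- The distribution (probability mass function) of the random variable `X` when `ω` has
weight `p ω`, i.e. the push-forward of `p` along `X`. -/
noncomputable def law (p : Ω → ℝ) (X : Ω → S) (s : S) : ℝ :=
  ∑ ω : Ω, if X ω = s then p ω else 0

open Classical in
/-- The conditional distribution of `ω` given `Z ω = z`, as a mass function on all of `Ω`.
It is the junk value `0` when `law p Z z = 0`. -/
noncomputable def condDist (p : Ω → ℝ) (Z : Ω → S) (z : S) (ω : Ω) : ℝ :=
  if Z ω = z then p ω / law p Z z else 0

theorem law_nonneg {p : Ω → ℝ} (hp : ∀ ω, 0 ≤ p ω) (X : Ω → S) (s : S) : 0 ≤ law p X s :=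
  Finset.sum_nonneg fun ω _ => by split_ifs <;> simp [hp ω]

theorem sum_law [Fintype S] (p : Ω → ℝ) (X : Ω → S) : ∑ s, law p X s = ∑ ω, p ω := by
  classical
  simp only [law]
  rw [Finset.sum_comm]
  simp

theorem law_law {T : Type*} [Fintype S] (p : Ω → ℝ) (X : Ω → S) (Y : S → T) :
    law (law p X) Y = law p (fun ω => Y (X ω)) := by
  classical
  ext t
  calc ∑ s, (if Y s = t then law p X s else 0)
      = ∑ ω, ∑ s, if X ω = s then (if Y s = t then p ω else 0) else 0 := by
        rw [Finset.sum_comm]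
        refine Finset.sum_congr rfl fun s _ => ?_
        by_cases hs : Y s = t <;> simp [law, hs]
    _ = law p (fun ω => Y (X ω)) t := by simp [law]

theorem eq_zero_of_law_eq_zero {p : Ω → ℝ} (hp : ∀ ω, 0 ≤ p ω) {X : Ω → S} {ω : Ω}
    (h : law p X (X ω) = 0) : p ω = 0 := by
  classical
  have hterm := (Finset.sum_eq_zero_iff_of_nonneg
    fun ω' _ => by split_ifs <;> simp [hp ω']).mp h ω (Finset.mem_univ ω)
  simpa using hterm

theorem sum_condDist {p : Ω → ℝ} {Z : Ω → S} {z : S} (hz : law p Z z ≠ 0) :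
    ∑ ω, condDist p Z z ω = 1 := by
  classical
  calc ∑ ω, condDist p Z z ω = law p Z z / law p Z z := by
        simp only [condDist, law, Finset.sum_div, ite_div, zero_div]
    _ = 1 := div_self hz

theorem law_prodMk {T : Type*} {p : Ω → ℝ} (hp : ∀ ω, 0 ≤ p ω) (X : Ω → T) (Z : Ω → S)
    (t : T) (z : S) :
    law p (fun ω => (X ω, Z ω)) (t, z) = law p Z z * law (condDist p Z z) X t := by
  classical
  have hmul (ω : Ω) (hω : Z ω = z) : law p Z z * (p ω / law p Z z) = p ω := by
    subst hω
    exact mul_div_cancel_of_imp' (eq_zero_of_law_eq_zero hp)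
  rw [law, law.eq_def (condDist p Z z), Finset.mul_sum]
  refine Finset.sum_congr rfl fun ω _ => ?_
  by_cases hX : X ω = t <;> by_cases hZ : Z ω = z <;> simp [condDist, hX, hZ, hmul]

end Distributions

section Entropy

variable {Ω S T W : Type*} [Fintype Ω] [Fintype S] [Fintype T] [Fintype W]

theorem nml2_mul (x y : ℝ) : nml2 (x * y) = y * nml2 x + x * nml2 y := by
  have hnml2 (z : ℝ) : nml2 z = Real.negMulLog z / Real.log 2 := by
    rw [nml2, Real.negMulLog, Real.logb, mul_div_assoc]
  simp only [hnml2, Real.negMulLog_mul]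
  ring

theorem entropy_eq_sum_law (p : Ω → ℝ) (X : Ω → S) : entropy p X = ∑ s, nml2 (law p X s) :=
  rfl

theorem mutualInfo_law (p : Ω → ℝ) (g : Ω → W) (X : W → S) (Y : W → T) :
    mutualInfo (law p g) X Y = mutualInfo p (fun ω => X (g ω)) (fun ω => Y (g ω)) := by
  simp only [mutualInfo, entropy_eq_sum_law, law_law]

theorem condEntropy_eq_sum {p : Ω → ℝ} (hp : ∀ ω, 0 ≤ p ω) (X : Ω → S) (Z : Ω → W) :
    condEntropy p X Z = ∑ z, law p Z z * entropy (condDist p Z z) X := by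
  have hfiber (z : W) : ∑ s, nml2 (law p (fun ω => (X ω, Z ω)) (s, z)) =
      nml2 (law p Z z) + law p Z z * entropy (condDist p Z z) X := by
    simp only [law_prodMk hp, nml2_mul, Finset.sum_add_distrib, ← Finset.sum_mul,
      ← Finset.mul_sum, sum_law, ← entropy_eq_sum_law]
    by_cases hz : law p Z z = 0
    · simp [hz, nml2]
    · rw [sum_condDist hz, one_mul]
  rw [condEntropy, sub_eq_iff_eq_add', entropy_eq_sum_law, Fintype.sum_prod_type_right,
    entropy_eq_sum_law, ← Finset.sum_add_distrib]
  exact Finset.sum_congr rfl fun z _ => hfiber z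

theorem condMutualInfo_eq_sum {p : Ω → ℝ} (hp : ∀ ω, 0 ≤ p ω)
    (X : Ω → S) (Y : Ω → T) (Z : Ω → W) :
    condMutualInfo p X Y Z = ∑ z, law p Z z * mutualInfo (condDist p Z z) X Y := by
  calc condMutualInfo p X Y Z
      = condEntropy p X Z + condEntropy p Y Z - condEntropy p (fun ω => (X ω, Y ω)) Z := by
        simp only [condMutualInfo, condEntropy]
        ring
    _ = ∑ z, law p Z z * mutualInfo (condDist p Z z) X Y := by
        simp only [condEntropy_eq_sum hp, mutualInfo, mul_sub, mul_add,
          Finset.sum_sub_distrib, Finset.sum_add_distrib]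

theorem exists_mutualInfo_condDist_le_condMutualInfo {p : Ω → ℝ} (hp : ∀ ω, 0 ≤ p ω)
    (hp_sum : ∑ ω, p ω = 1) (X : Ω → S) (Y : Ω → T) (Z : Ω → W) :
    ∃ z, 0 < law p Z z ∧ mutualInfo (condDist p Z z) X Y ≤ condMutualInfo p X Y Z := by
  classical
  have hlaw_sum : ∑ z, law p Z z = 1 := (sum_law p Z).trans hp_sum
  have haverage : Finset.centerMass {z | law p Z z ≠ 0} (law p Z)
      (fun z => mutualInfo (condDist p Z z) X Y) = condMutualInfo p X Y Z := by
    rw [Finset.centerMass_filter_ne_zero, Finset.centerMass_eq_of_sum_1 _ _ hlaw_sum,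
      condMutualInfo_eq_sum hp]
    rfl
  obtain ⟨z, hz, hle⟩ := (concaveOn_id (𝕜 := ℝ) convex_univ).exists_le_of_centerMass
    (fun z _ => law_nonneg hp Z z) (by rw [Finset.sum_filter_ne_zero, hlaw_sum]; exact one_pos)
    (fun z _ => Set.mem_univ (mutualInfo (condDist p Z z) X Y))
  exact ⟨z, (law_nonneg hp Z z).lt_of_ne' (Finset.mem_filter.mp hz).2, hle.trans_eq haverage⟩

end Entropy

section UniformFiber

variable {A B C : Type*} {f : A × B → C} {φ : C → A → B}

theorem apply_eq_iff_eq_section (hinj : ∀ a : A, Function.Injective (fun b => f (a, b)))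
    (hφ : ∀ (σ : C) (a : A), f (a, φ σ a) = σ) (σ : C) (a : A) (b : B) :
    f (a, b) = σ ↔ b = φ σ a :=
  ⟨fun h => hinj a (h.trans (hφ σ a).symm), fun h => h ▸ hφ σ a⟩

variable [Fintype A] [Fintype B]

theorem law_div_card (hinj : ∀ a : A, Function.Injective (fun b => f (a, b)))
    (hφ : ∀ (σ : C) (a : A), f (a, φ σ a) = σ) (q : A → ℝ) (σ : C) :
    law (fun ω : A × B => q ω.1 / Fintype.card B) f σ = (∑ a, q a) / Fintype.card B := by
  classical
  simp [law, Fintype.sum_prod_type, apply_eq_iff_eq_section hinj hφ, Finset.sum_div]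

theorem condDist_div_card [Nonempty B] (hinj : ∀ a : A, Function.Injective (fun b => f (a, b)))
    (hφ : ∀ (σ : C) (a : A), f (a, φ σ a) = σ) {q : A → ℝ} (hq_sum : ∑ a, q a = 1) (σ : C) :
    condDist (fun ω : A × B => q ω.1 / Fintype.card B) f σ = law q (fun a => (a, φ σ a)) := by
  classical
  ext ⟨a, b⟩
  have hB : (Fintype.card B : ℝ) ≠ 0 := by simp
  calc condDist (fun ω : A × B => q ω.1 / Fintype.card B) f σ (a, b)
      = if b = φ σ a then q a else 0 := by
        simp [condDist, law_div_card hinj hφ, hq_sum, apply_eq_iff_eq_section hinj hφ, hB]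
    _ = law q (fun a => (a, φ σ a)) (a, b) := by
        simp [law, ite_and, eq_comm (a := b)]

end UniformFiber

theorem stmt9_general {A B C : Type*} [Fintype A] [Fintype B] [Fintype C] [Nonempty B]
    {f : A × B → C} (hinj : ∀ a : A, Function.Injective (fun b => f (a, b)))
    {φ : C → A → B} (hφ : ∀ (σ : C) (a : A), f (a, φ σ a) = σ)
    {q : A → ℝ} (hq : ∀ a, 0 ≤ q a) (hq_sum : ∑ a, q a = 1)
    {S T : Type*} [Fintype S] [Fintype T] (X : A × B → S) (Y : A × B → T) :
    ∃ σ : C, mutualInfo q (fun a => X (a, φ σ a)) (fun a => Y (a, φ σ a)) ≤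
      condMutualInfo (fun ω : A × B => q ω.1 / Fintype.card B) X Y f := by
  have hp (ω : A × B) : 0 ≤ q ω.1 / Fintype.card B := div_nonneg (hq ω.1) (Nat.cast_nonneg _)
  have hp_sum : ∑ ω : A × B, q ω.1 / Fintype.card B = 1 := by
    simp [Fintype.sum_prod_type, mul_div_cancel₀, hq_sum]
  obtain ⟨σ, -, hσ⟩ := exists_mutualInfo_condDist_le_condMutualInfo hp hp_sum X Y f
  rw [condDist_div_card hinj hφ hq_sum, mutualInfo_law] at hσ
  exact ⟨σ, hσ⟩

/- Mathematical core of Part 2a of Theorem 2: with `(U, V)` uniform on `A × B`,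
`|C| = |B|`, each `b ↦ f (a, b)` injective with inverse `φ σ`, if the index code
leaks at most `η` given the broadcast codeword, i.e.
`I(h₁(U); h₂(V) | f(U, V)) ≤ η`, then some `σ` can be hard-wired so that the
derived deterministic network code leaks at most `η`:
`I(h₁(U'); h₂(φ σ U')) ≤ η` with `U'` uniform on `A`. -/
theorem stmt9 {A B C : Type*} [Fintype A] [Fintype B] [Fintype C]
    [Nonempty A] [Nonempty B] [Nonempty C]
    (hcard : Fintype.card C = Fintype.card B)
    (f : A × B → C)
    (hinj : ∀ a : A, Function.Injective (fun b => f (a, b)))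
    (φ : C → A → B) (hφ : ∀ (σ : C) (a : A), f (a, φ σ a) = σ)
    {T1 T2 : Type*} [Fintype T1] [Fintype T2]
    (h₁ : A → T1) (h₂ : B → T2) (η : ℝ) (hη : 0 ≤ η)
    (hsec : condMutualInfo
        (fun _ : A × B => (1 : ℝ) / ((Fintype.card A : ℝ) * (Fintype.card B : ℝ)))
        (fun ab => h₁ ab.1) (fun ab => h₂ ab.2) f ≤ η) :
    ∃ σ : C, mutualInfo (fun _ : A => (1 : ℝ) / (Fintype.card A : ℝ))
        h₁ (fun a => h₂ (φ σ a)) ≤ η := by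
  simp only [← div_div] at hsec
  exact (stmt9_general hinj hφ (q := fun _ => 1 / Fintype.card A) (fun _ => by positivity) (by simp)
    (fun ab => h₁ ab.1) (fun ab => h₂ ab.2)).imp fun _ h => h.trans hsec
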